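/- Let π₁, π₂ be strategy profiles of a finite discounted stochastic game with ‖π₁ − π₂‖∞ ≤ δ. Then for every agent i and every state s, |V^{π₁^i,π₁^{-i}}(s) − V^{π₂^i,π₂^{-i}}(s)| ≤ 2nS²A_max R_max δ/(1−γ)². -/

import Mathlib

/-!
The value function satisfies the Bellman equation `V = r^π + γ P^π V`, because `1 - γ P^π` is
invertible (`V_bellman`). Subtracting the equations of the two profiles gives
`V₁ - V₂ = (r₁ - r₂) + γ (P₁ - P₂) V₂ + γ P₁ (V₁ - V₂)`.

The first two terms are differences of expectations of bounded functions under the two joint action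
distributions. By `sum_abs_prod_sub_prod_le` the `ℓ¹` distance of two product distributions is at
most the sum of the `ℓ¹` distances of their factors, hence at most `T = n A_max δ`. With
`|r| ≤ R_max` and `|V₂| ≤ R_max / (1 - γ)` they contribute at most
`T R_max + γ T R_max / (1 - γ) = T R_max / (1 - γ)`. Since `γ P₁` is a `γ`-contraction in the sup
norm (`abs_le_of_contraction`), `|V₁ - V₂| ≤ T R_max / (1 - γ)²`, which is stronger than the
claimed bound by the factor `2 S² ≥ 1`.
-/

open Finset

/-- A finite discounted stochastic game with `n` agents, `S` states and
action counts `A i` for each agent `i`. -/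
structure SG (n S : ℕ) (A : Fin n → ℕ) where
  P : Fin S → (∀ i, Fin (A i)) → Fin S → ℝ
  r : Fin n → Fin S → (∀ i, Fin (A i)) → ℝ
  Rmax : ℝ
  γ : ℝ
  P_nonneg : ∀ s a s', 0 ≤ P s a s'
  P_sum_one : ∀ s a, ∑ s', P s a s' = 1
  r_nonneg : ∀ i s a, 0 ≤ r i s a
  r_le_Rmax : ∀ i s a, r i s a ≤ Rmax
  γ_nonneg : 0 ≤ γ
  γ_lt_one : γ < 1

namespace SG

variable {n S : ℕ} {A : Fin n → ℕ}

/-- A (behavioral) strategy profile: agent `i` plays at state `s` the distribution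
`π i s` on its actions. -/
abbrev Profile (n S : ℕ) (A : Fin n → ℕ) := ∀ i : Fin n, Fin S → Fin (A i) → ℝ

/-- `π` is a genuine strategy profile: each `π i s` is a probability distribution. -/
def IsProfile (π : Profile n S A) : Prop :=
  (∀ i s a, 0 ≤ π i s a) ∧ ∀ i s, ∑ a, π i s a = 1

/-- `A_max`, the largest number of actions of any agent. -/
def Amax (A : Fin n → ℕ) : ℕ := Finset.univ.sup A

/-- Probability of the joint action `a` at state `s` under profile `π`. -/
def jointProb (π : Profile n S A) (s : Fin S) (a : ∀ i, Fin (A i)) : ℝ :=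
  ∏ i, π i s (a i)

/-- The state-transition matrix `P^π` induced by the profile `π`. -/
noncomputable def Pmat (g : SG n S A) (π : Profile n S A) : Matrix (Fin S) (Fin S) ℝ :=
  fun s s' => ∑ a, jointProb π s a * g.P s a s'

/-- Expected one-step reward `r^{i,π}(s)` of agent `i` at state `s` under `π`. -/
noncomputable def rvec (g : SG n S A) (π : Profile n S A) (i : Fin n) (s : Fin S) : ℝ :=
  ∑ a, jointProb π s a * g.r i s a

/-- The value function `V^{π^i,π^{-i}}` of agent `i` under profile `π`: the unique
solution of the Bellman equation `V = r^{i,π} + γ P^π V`, i.e. `(I − γP^π)⁻¹ r^{i,π}`. -/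
noncomputable def V (g : SG n S A) (π : Profile n S A) (i : Fin n) : Fin S → ℝ :=
  Matrix.mulVec (1 - g.γ • g.Pmat π)⁻¹ (g.rvec π i)

/-- The profile obtained from `π` by letting agent `i` play the pure action `a`
at state `s` (and `π i` at every other state). -/
def devProfile (π : Profile n S A) (i : Fin n) (s : Fin S) (a : Fin (A i)) : Profile n S A :=
  Function.update π i (fun t b => if t = s then (if b = a then (1 : ℝ) else 0) else π i t b)

/-- The one-step-deviation value `V^{π^i,π^{-i}}_{π^i(s,a)=1}(s)`. -/
noncomputable def Vdev (g : SG n S A) (π : Profile n S A) (i : Fin n) (s : Fin S)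
    (a : Fin (A i)) : ℝ :=
  g.V (devProfile π i s a) i s

/-- `D^{π}_{a}(s) = max(0, V^{π^i,π^{-i}}_{π^i(s,a)=1}(s) − V^{π^i,π^{-i}}(s))`. -/
noncomputable def D (g : SG n S A) (π : Profile n S A) (i : Fin n) (s : Fin S)
    (a : Fin (A i)) : ℝ :=
  max 0 (g.Vdev π i s a - g.V π i s)

/-- Nash's improvement map `f` on strategy profiles. -/
noncomputable def f (g : SG n S A) (π : Profile n S A) : Profile n S A :=
  fun i s a => (π i s a + g.D π i s a) / (1 + ∑ b, g.D π i s b)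

/-- `π` is a Markov perfect equilibrium: no agent can improve its value at any state
by unilaterally switching to another behavioral strategy. -/
def IsMPE (g : SG n S A) (π : Profile n S A) : Prop :=
  ∀ (s : Fin S) (i : Fin n) (σ : Fin S → Fin (A i) → ℝ),
    ((∀ t b, 0 ≤ σ t b) ∧ ∀ t, ∑ b, σ t b = 1) →
    g.V (Function.update π i σ) i s ≤ g.V π i s

/-- `π` is an `ε`-approximate Markov perfect equilibrium. -/
def IsApproxMPE (g : SG n S A) (π : Profile n S A) (ε : ℝ) : Prop :=
  ∀ (s : Fin S) (i : Fin n) (σ : Fin S → Fin (A i) → ℝ),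
    ((∀ t b, 0 ≤ σ t b) ∧ ∀ t, ∑ b, σ t b = 1) →
    g.V (Function.update π i σ) i s - ε ≤ g.V π i s

end SG

/-- The `ℓ¹` distance between two product distributions is at most the sum of the `ℓ¹` distances
between their factors. -/
theorem sum_abs_prod_sub_prod_le : ∀ {n : ℕ} {A : Fin n → ℕ} (p q : ∀ i, Fin (A i) → ℝ),
    (∀ i a, 0 ≤ p i a) → (∀ i, ∑ a, p i a = 1) → (∀ i a, 0 ≤ q i a) → (∀ i, ∑ a, q i a = 1) →
    ∑ a : (∀ i, Fin (A i)), |∏ i, p i (a i) - ∏ i, q i (a i)| ≤ ∑ i, ∑ b, |p i b - q i b| := by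
  intro n
  induction n with
  | zero => intro A p q _ _ _ _; simp
  | succ n ih =>
    intro A p q hp hp1 hq hq1
    have ih' := ih (fun i => p i.succ) (fun i => q i.succ) (fun i => hp i.succ)
      (fun i => hp1 i.succ) (fun i => hq i.succ) (fun i => hq1 i.succ)
    have hone : ∑ a : (∀ i : Fin n, Fin (A i.succ)), ∏ i, p i.succ (a i) = 1 := by
      rw [← Fintype.prod_sum (fun i : Fin n => p i.succ)]
      exact Finset.prod_eq_one fun i _ => hp1 i.succ
    rw [← (Fin.consEquiv (fun i => Fin (A i))).sum_comp, Fintype.sum_prod_type, Fin.sum_univ_succ]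
    simp only [Fin.consEquiv, Equiv.coe_fn_mk, Fin.prod_univ_succ, Fin.cons_zero, Fin.cons_succ]
    calc ∑ b, ∑ a : (∀ i : Fin n, Fin (A i.succ)),
          |p 0 b * ∏ i, p i.succ (a i) - q 0 b * ∏ i, q i.succ (a i)|
        ≤ ∑ b, ∑ a : (∀ i : Fin n, Fin (A i.succ)),
          (|p 0 b - q 0 b| * ∏ i, p i.succ (a i)
            + q 0 b * |∏ i, p i.succ (a i) - ∏ i, q i.succ (a i)|) := by
          gcongr with b _ a _
          have hX : 0 ≤ ∏ i : Fin n, p i.succ (a i) := Finset.prod_nonneg fun i _ => hp _ _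
          generalize (∏ i : Fin n, p i.succ (a i)) = X at *
          generalize (∏ i : Fin n, q i.succ (a i)) = Y at *
          have e : p 0 b * X - q 0 b * Y = (p 0 b - q 0 b) * X + q 0 b * (X - Y) := by ring
          rw [e]
          refine (abs_add_le _ _).trans ?_
          rw [abs_mul, abs_mul, abs_of_nonneg hX, abs_of_nonneg (hq 0 b)]
      _ = ∑ b, |p 0 b - q 0 b| + ∑ a : (∀ i : Fin n, Fin (A i.succ)),
            |∏ i, p i.succ (a i) - ∏ i, q i.succ (a i)| := by
          simp only [Finset.sum_add_distrib, ← Finset.mul_sum, hone, ← Finset.sum_mul, hq1,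
            mul_one, one_mul]
      _ ≤ _ := by gcongr

/-- A sup-norm contraction estimate: it is read off at a coordinate where `|x|` is maximal. -/
theorem abs_le_of_contraction {S : ℕ} {γ c : ℝ} (hγ0 : 0 ≤ γ) (hγ1 : γ < 1)
    (M : Matrix (Fin S) (Fin S) ℝ) (hM : ∀ s t, 0 ≤ M s t) (hM1 : ∀ s, ∑ t, M s t = 1)
    (x : Fin S → ℝ) (hx : ∀ s, |x s| ≤ c + γ * |M.mulVec x s|) (s : Fin S) :
    |x s| ≤ c / (1 - γ) := by
  obtain ⟨m, -, hm⟩ := Finset.exists_max_image Finset.univ (fun t => |x t|) ⟨s, Finset.mem_univ s⟩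
  have hav : |M.mulVec x m| ≤ |x m| := by
    calc |M.mulVec x m| = |∑ t, M m t * x t| := rfl
      _ ≤ ∑ t, |M m t * x t| := Finset.abs_sum_le_sum_abs _ _
      _ ≤ ∑ t, M m t * |x m| := by
          gcongr with t _
          rw [abs_mul, abs_of_nonneg (hM m t)]
          exact mul_le_mul_of_nonneg_left (hm t (Finset.mem_univ t)) (hM m t)
      _ = |x m| := by rw [← Finset.sum_mul, hM1, one_mul]
  have h := hx m
  have h' : γ * |M.mulVec x m| ≤ γ * |x m| := mul_le_mul_of_nonneg_left hav hγ0
  refine (hm s (Finset.mem_univ s)).trans ?_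
  rw [le_div_iff₀ (by linarith)]
  linarith

namespace SG

theorem jointProb_nonneg {n S : ℕ} {A : Fin n → ℕ} {π : Profile n S A} (h : IsProfile π)
    (s : Fin S) (a : ∀ i, Fin (A i)) : 0 ≤ jointProb π s a :=
  Finset.prod_nonneg fun i _ => h.1 i s (a i)

theorem jointProb_sum {n S : ℕ} {A : Fin n → ℕ} {π : Profile n S A} (h : IsProfile π)
    (s : Fin S) : ∑ a, jointProb π s a = 1 := by
  unfold jointProb
  rw [← Fintype.prod_sum (fun i => π i s)]
  exact Finset.prod_eq_one fun i _ => h.2 i s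

theorem Pmat_mulVec {n S : ℕ} {A : Fin n → ℕ} (g : SG n S A) (π : Profile n S A)
    (v : Fin S → ℝ) (s : Fin S) :
    (g.Pmat π).mulVec v s = ∑ a, jointProb π s a * ∑ t, g.P s a t * v t := by
  simp only [Matrix.mulVec, dotProduct, Pmat, Finset.sum_mul, Finset.mul_sum]
  rw [Finset.sum_comm]
  simp only [mul_assoc]

theorem Pmat_nonneg {n S : ℕ} {A : Fin n → ℕ} (g : SG n S A) {π : Profile n S A}
    (h : IsProfile π) (s t : Fin S) : 0 ≤ g.Pmat π s t :=
  Finset.sum_nonneg fun a _ => mul_nonneg (jointProb_nonneg h s a) (g.P_nonneg s a t)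

theorem Pmat_sum {n S : ℕ} {A : Fin n → ℕ} (g : SG n S A) {π : Profile n S A}
    (h : IsProfile π) (s : Fin S) : ∑ t, g.Pmat π s t = 1 := by
  unfold Pmat
  rw [Finset.sum_comm]
  simp only [← Finset.mul_sum, g.P_sum_one, mul_one, jointProb_sum h]

/-- The Bellman equation. The matrix `1 - γ P^π` has trivial kernel by contraction, so the inverse
in the definition of `V` is a genuine one. -/
theorem V_bellman {n S : ℕ} {A : Fin n → ℕ} (g : SG n S A) {π : Profile n S A}
    (h : IsProfile π) (i : Fin n) (s : Fin S) :
    g.V π i s = g.rvec π i s + g.γ * (g.Pmat π).mulVec (g.V π i) s := by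
  have hu : IsUnit (1 - g.γ • g.Pmat π) := by
    rw [← Matrix.mulVec_injective_iff_isUnit]
    intro x y hxy
    have h0 : ∀ s, |(x - y) s| ≤ 0 + g.γ * |(g.Pmat π).mulVec (x - y) s| := by
      intro s
      have e := congrFun hxy s
      simp only [Matrix.sub_mulVec, Matrix.one_mulVec, Matrix.smul_mulVec, Pi.sub_apply,
        Pi.smul_apply, smul_eq_mul] at e
      have e' : (x - y) s = g.γ * (g.Pmat π).mulVec (x - y) s := by
        rw [Matrix.mulVec_sub, Pi.sub_apply, Pi.sub_apply]; linarith
      rw [zero_add, ← abs_of_nonneg g.γ_nonneg, ← abs_mul, ← e']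
    funext s
    have hs := abs_le_of_contraction g.γ_nonneg g.γ_lt_one (g.Pmat π) (g.Pmat_nonneg h)
      (g.Pmat_sum h) (x - y) h0 s
    rw [zero_div] at hs
    exact sub_eq_zero.1 (abs_nonpos_iff.1 hs)
  have hV : (1 - g.γ • g.Pmat π).mulVec (g.V π i) = g.rvec π i := by
    unfold V
    rw [Matrix.mulVec_mulVec, Matrix.mul_nonsing_inv _ ((Matrix.isUnit_iff_isUnit_det _).1 hu),
      Matrix.one_mulVec]
  have e := congrFun hV s
  simp only [Matrix.sub_mulVec, Matrix.one_mulVec, Matrix.smul_mulVec, Pi.sub_apply,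
    Pi.smul_apply, smul_eq_mul] at e
  linarith

theorem rvec_nonneg {n S : ℕ} {A : Fin n → ℕ} (g : SG n S A) {π : Profile n S A}
    (h : IsProfile π) (i : Fin n) (s : Fin S) : 0 ≤ g.rvec π i s :=
  Finset.sum_nonneg fun a _ => mul_nonneg (jointProb_nonneg h s a) (g.r_nonneg i s a)

theorem rvec_le {n S : ℕ} {A : Fin n → ℕ} (g : SG n S A) {π : Profile n S A}
    (h : IsProfile π) (i : Fin n) (s : Fin S) : g.rvec π i s ≤ g.Rmax := by
  calc g.rvec π i s ≤ ∑ a, jointProb π s a * g.Rmax :=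
        Finset.sum_le_sum fun a _ =>
          mul_le_mul_of_nonneg_left (g.r_le_Rmax i s a) (jointProb_nonneg h s a)
    _ = g.Rmax := by rw [← Finset.sum_mul, jointProb_sum h, one_mul]

theorem abs_V_le {n S : ℕ} {A : Fin n → ℕ} (g : SG n S A) {π : Profile n S A}
    (h : IsProfile π) (i : Fin n) (s : Fin S) : |g.V π i s| ≤ g.Rmax / (1 - g.γ) := by
  refine abs_le_of_contraction g.γ_nonneg g.γ_lt_one (g.Pmat π) (g.Pmat_nonneg h)
    (g.Pmat_sum h) _ (fun s => ?_) s
  rw [g.V_bellman h i s]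
  refine (abs_add_le _ _).trans ?_
  rw [abs_mul, abs_of_nonneg g.γ_nonneg, abs_of_nonneg (g.rvec_nonneg h i s)]
  gcongr
  exact g.rvec_le h i s

theorem sum_abs_jointProb_sub_le {n S : ℕ} {A : Fin n → ℕ}
    {π₁ π₂ : Profile n S A} (h₁ : IsProfile π₁) (h₂ : IsProfile π₂)
    {δ : ℝ} (hδ : ∀ i s a, |π₁ i s a - π₂ i s a| ≤ δ) (s : Fin S) :
    ∑ a, |jointProb π₁ s a - jointProb π₂ s a| ≤ (n : ℝ) * (Amax A : ℝ) * δ := by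
  have h := sum_abs_prod_sub_prod_le (fun i => π₁ i s) (fun i => π₂ i s) (fun i => h₁.1 i s)
    (fun i => h₁.2 i s) (fun i => h₂.1 i s) (fun i => h₂.2 i s)
  refine h.trans ?_
  have key : ∀ i : Fin n, ∑ b, |π₁ i s b - π₂ i s b| ≤ (Amax A : ℝ) * δ := by
    intro i
    -- The action set of agent `i` is nonempty, as it carries a probability distribution.
    have hne : (Finset.univ : Finset (Fin (A i))).Nonempty := by
      by_contra hc
      have := h₁.2 i s
      rw [Finset.not_nonempty_iff_eq_empty.1 hc, Finset.sum_empty] at this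
      exact zero_ne_one this
    obtain ⟨b, -⟩ := hne
    have hδ0 : 0 ≤ δ := (abs_nonneg _).trans (hδ i s b)
    have hA : A i ≤ Amax A := Finset.le_sup (f := A) (Finset.mem_univ i)
    calc ∑ b, |π₁ i s b - π₂ i s b| ≤ ∑ _b : Fin (A i), δ := Finset.sum_le_sum fun b _ => hδ i s b
      _ = (A i : ℝ) * δ := by simp
      _ ≤ (Amax A : ℝ) * δ := by gcongr
  calc ∑ i, ∑ b, |π₁ i s b - π₂ i s b| ≤ ∑ _i : Fin n, (Amax A : ℝ) * δ :=
        Finset.sum_le_sum fun i _ => key i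
    _ = (n : ℝ) * (Amax A : ℝ) * δ := by simp [mul_assoc]

theorem abs_expect_sub_le {n S : ℕ} {A : Fin n → ℕ}
    {π₁ π₂ : Profile n S A} (h₁ : IsProfile π₁) (h₂ : IsProfile π₂)
    {δ : ℝ} (hδ : ∀ i s a, |π₁ i s a - π₂ i s a| ≤ δ) (s : Fin S)
    (F : (∀ i, Fin (A i)) → ℝ) {B : ℝ} (hB : 0 ≤ B) (hF : ∀ a, |F a| ≤ B) :
    |∑ a, jointProb π₁ s a * F a - ∑ a, jointProb π₂ s a * F a| ≤
      (n : ℝ) * (Amax A : ℝ) * δ * B := by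
  rw [← Finset.sum_sub_distrib]
  calc |∑ a, (jointProb π₁ s a * F a - jointProb π₂ s a * F a)|
      ≤ ∑ a, |jointProb π₁ s a * F a - jointProb π₂ s a * F a| := Finset.abs_sum_le_sum_abs _ _
    _ ≤ ∑ a, |jointProb π₁ s a - jointProb π₂ s a| * B := by
        gcongr with a _
        rw [← sub_mul, abs_mul]
        exact mul_le_mul_of_nonneg_left (hF a) (abs_nonneg _)
    _ ≤ _ := by
        rw [← Finset.sum_mul]
        exact mul_le_mul_of_nonneg_right (sum_abs_jointProb_sub_le h₁ h₂ hδ s) hB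

end SG

open SG in
/-- `|V^{π₁^i,π₁^{-i}}(s) − V^{π₂^i,π₂^{-i}}(s)| ≤ 2nS²A_max R_max δ/(1−γ)²`. -/
theorem abs_V_diff_le {n S : ℕ} {A : Fin n → ℕ} (g : SG n S A)
    (π₁ π₂ : Profile n S A) (h₁ : IsProfile π₁) (h₂ : IsProfile π₂)
    (δ : ℝ) (hδ : ∀ i s a, |π₁ i s a - π₂ i s a| ≤ δ) :
    ∀ (i : Fin n) (s : Fin S),
      |g.V π₁ i s - g.V π₂ i s| ≤
        2 * (n : ℝ) * (S : ℝ) ^ 2 * (Amax A : ℝ) * g.Rmax * δ / (1 - g.γ) ^ 2 := by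
  intro i s
  have hR : 0 ≤ g.Rmax := (g.rvec_nonneg h₁ i s).trans (g.rvec_le h₁ i s)
  have hγ : 0 < 1 - g.γ := sub_pos.2 g.γ_lt_one
  have hT : 0 ≤ (n : ℝ) * (Amax A : ℝ) * δ :=
    (Finset.sum_nonneg fun a _ => abs_nonneg _).trans (sum_abs_jointProb_sub_le h₁ h₂ hδ s)
  set T : ℝ := (n : ℝ) * (Amax A : ℝ) * δ with hTdef
  have hB : 0 ≤ g.Rmax / (1 - g.γ) := div_nonneg hR hγ.le
  have hr : ∀ s, |g.rvec π₁ i s - g.rvec π₂ i s| ≤ T * g.Rmax := fun s =>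
    abs_expect_sub_le h₁ h₂ hδ s (g.r i s) hR fun a => by
      rw [abs_of_nonneg (g.r_nonneg i s a)]; exact g.r_le_Rmax i s a
  have hP : ∀ s, |(g.Pmat π₁).mulVec (g.V π₂ i) s - (g.Pmat π₂).mulVec (g.V π₂ i) s| ≤
      T * (g.Rmax / (1 - g.γ)) := fun s => by
    rw [Pmat_mulVec, Pmat_mulVec]
    refine abs_expect_sub_le h₁ h₂ hδ s _ hB fun a => ?_
    calc |∑ t, g.P s a t * g.V π₂ i t| ≤ ∑ t, |g.P s a t * g.V π₂ i t| :=
          Finset.abs_sum_le_sum_abs _ _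
      _ ≤ ∑ t, g.P s a t * (g.Rmax / (1 - g.γ)) := by
          gcongr with t _
          rw [abs_mul, abs_of_nonneg (g.P_nonneg s a t)]
          exact mul_le_mul_of_nonneg_left (g.abs_V_le h₂ i t) (g.P_nonneg s a t)
      _ = g.Rmax / (1 - g.γ) := by rw [← Finset.sum_mul, g.P_sum_one, one_mul]
  have hmain : |(g.V π₁ i - g.V π₂ i) s| ≤ (T * g.Rmax / (1 - g.γ)) / (1 - g.γ) := by
    refine abs_le_of_contraction g.γ_nonneg g.γ_lt_one (g.Pmat π₁) (g.Pmat_nonneg h₁)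
      (g.Pmat_sum h₁) _ (fun s => ?_) s
    have e : (g.V π₁ i - g.V π₂ i) s = (g.rvec π₁ i s - g.rvec π₂ i s)
        + g.γ * ((g.Pmat π₁).mulVec (g.V π₂ i) s - (g.Pmat π₂).mulVec (g.V π₂ i) s)
        + g.γ * (g.Pmat π₁).mulVec (g.V π₁ i - g.V π₂ i) s := by
      rw [Matrix.mulVec_sub, Pi.sub_apply, Pi.sub_apply]
      linear_combination g.V_bellman h₁ i s - g.V_bellman h₂ i s
    have hc : T * g.Rmax / (1 - g.γ) = T * g.Rmax + g.γ * (T * (g.Rmax / (1 - g.γ))) := by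
      field_simp
      ring
    rw [hc, e]
    refine (abs_add_le _ _).trans (add_le_add ((abs_add_le _ _).trans (add_le_add (hr s) ?_)) ?_)
    · rw [abs_mul, abs_of_nonneg g.γ_nonneg]
      exact mul_le_mul_of_nonneg_left (hP s) g.γ_nonneg
    · rw [abs_mul, abs_of_nonneg g.γ_nonneg]
  -- The state `s` witnesses `S ≥ 1`.
  have hS : (1 : ℝ) ≤ S := by exact_mod_cast s.pos
  have hS2 : (1 : ℝ) ≤ 2 * (S : ℝ) ^ 2 := by nlinarith
  calc |g.V π₁ i s - g.V π₂ i s| ≤ (T * g.Rmax / (1 - g.γ)) / (1 - g.γ) := hmain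
    _ = 1 * (T * g.Rmax / (1 - g.γ) ^ 2) := by field_simp
    _ ≤ 2 * (S : ℝ) ^ 2 * (T * g.Rmax / (1 - g.γ) ^ 2) := by gcongr
    _ = _ := by rw [hTdef]; ring
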